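/- arXiv:1507.01814 — 3 statements merged into one kernel-verified Lean document; each statement's English description precedes it below -/
import Mathlib

section
/- Let p > 3 and N > 3 be integers with p prime and p ∤ N, and let Γ = Γ₁(N). Fix an integer r coprime to p with r ≢ 1 (mod p) and a real number ε > 0, and let X be the set of prime numbers q with q > ε, q ≡ r (mod p) and q ≡ 1 (mod N²). Let R be the integral closure of ℤ_p in an algebraic closure of ℚ_p, and let E be an R-module equipped with an R-linear action of Γ. Let α : D₀ → E be a Γ-equivariant group homomorphism such that α({0} − {∞}) = 0 and such that for every prime q ∈ X and every nontrivial Dirichlet character χ modulo q with values in R one has Σ_{m=0}^{q−1} χ̄(m) · α({m/q} − {∞}) = 0. Then the associated 1-cocycle of α is a coboundary: there exists e ∈ E such that α({0} − {γ·0}) = γ·e − e for every γ ∈ Γ. -/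
/-!
The theorem holds with `e = 0`: the cocycle itself vanishes.

Write `G x` for the assertion `α ({0} − {x}) = 0`. The translations `x ↦ x + n` fix `∞` and the
shears `x ↦ x / (N k x + 1)` fix `0`; since `α ({0} − {∞}) = 0`, equivariance shows that `G` is
preserved by both (`vanish_translate`, `vanish_shear`).

Let `q ∈ X`. Since `q - 1 ≡ r - 1` is prime to `p`, it is a unit of `R`, and `R` contains all roots
of unity; so the hypothesis on all nontrivial characters mod `q` says, by orthogonality, that
`α ({m/q} − {∞})` does not depend on `m` prime to `q` (`eq_of_twisted_sums_eq_zero`). For `m = 1`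
it vanishes, because `1/q` is the image of `0` under a translation followed by a shear
(`q ≡ 1 mod N`). Hence `G (m/q)` for all `m` prime to `q`.

Finally, for `γ ∈ Γ₁(N)` with right column `(b, d)` one has `γ·0 = b/d`. Applying Dirichlet's
theorem twice (`exists_translate_shear`), first a translation makes `b` a large prime `b'`, and
then a shear turns `d` into some `d + N k b' = q ∈ X`. So `G (b'/q)` implies `G (b/d)`.
-/

open scoped MatrixGroups

/-- The action of `SL(2, ℤ)` on `ℙ¹(ℚ) = ℚ ∪ {∞}` by fractional linear transformations
`γ·x = (ax + b)/(cx + d)`. -/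
noncomputable def moebius (g : SL(2, ℤ)) (x : OnePoint ℚ) : OnePoint ℚ :=
  OnePoint.elim x
    (if (g 1 0 : ℚ) = 0 then OnePoint.infty
      else (((g 0 0 : ℚ) / (g 1 0 : ℚ) : ℚ) : OnePoint ℚ))
    (fun q => if (g 1 0 : ℚ) * q + (g 1 1 : ℚ) = 0 then OnePoint.infty
      else ((((g 0 0 : ℚ) * q + (g 0 1 : ℚ)) / ((g 1 0 : ℚ) * q + (g 1 1 : ℚ)) : ℚ) :
        OnePoint ℚ))

/-- The degree of a divisor on `ℙ¹(ℚ)` (the sum of its coefficients). -/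
noncomputable def divisorDegree : (OnePoint ℚ →₀ ℤ) →+ ℤ :=
  Finsupp.liftAddHom fun _ => AddMonoidHom.id ℤ

/-- The group `D₀` of degree-zero divisors on `ℙ¹(ℚ)`. -/
noncomputable def D0 : AddSubgroup (OnePoint ℚ →₀ ℤ) := divisorDegree.ker

/-- The degree-zero divisor `{x} − {y}`. -/
noncomputable def bdiv (x y : OnePoint ℚ) : D0 :=
  ⟨Finsupp.single x 1 - Finsupp.single y 1, by
    simp [D0, AddMonoidHom.mem_ker, divisorDegree, map_sub]⟩

noncomputable instance (p : ℕ) [Fact p.Prime] : Algebra ℤ_[p] (AlgebraicClosure ℚ_[p]) :=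
  ((algebraMap ℚ_[p] (AlgebraicClosure ℚ_[p])).comp (algebraMap ℤ_[p] ℚ_[p])).toAlgebra

/-- The integral closure `R` of `ℤ_p` in an algebraic closure of `ℚ_p`. -/
noncomputable abbrev PadicIntClosure (p : ℕ) [Fact p.Prime] : Type :=
  integralClosure ℤ_[p] (AlgebraicClosure ℚ_[p])

/-! ### Orthogonality of Dirichlet characters over the integral closure of `ℤ_p` -/

/-- If all sums of `f` twisted by nontrivial Dirichlet characters mod a prime `q` vanish, then
`f` is constant on the units mod `q`, provided that `q - 1` is invertible in the ring of values. -/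
lemma eq_of_twisted_sums_eq_zero {R E : Type*} [CommRing R] [IsDomain R] [AddCommGroup E]
    [Module R E] {q : ℕ} [NeZero q] (hq : q.Prime)
    [HasEnoughRootsOfUnity R (Monoid.exponent (ZMod q)ˣ)]
    (hu : IsUnit ((q - 1 : ℕ) : R)) (f : ZMod q → E)
    (hf : ∀ χ : DirichletCharacter R q, χ ≠ 1 → ∑ m : ZMod q, χ m⁻¹ • f m = 0)
    {a b : ZMod q} (ha : IsUnit a) (hb : IsUnit b) : f a = f b := by
  classical
  have key : ∀ n : ZMod q, IsUnit n →
      ((q - 1 : ℕ) : R) • f n = ∑ m : ZMod q, (1 : DirichletCharacter R q) m⁻¹ • f m := by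
    intro n hn
    have h1 : ∑ χ : DirichletCharacter R q, χ n • ∑ m : ZMod q, χ m⁻¹ • f m
        = ∑ m : ZMod q, (1 : DirichletCharacter R q) m⁻¹ • f m := by
      rw [Finset.sum_eq_single (1 : DirichletCharacter R q)]
      · rw [MulChar.one_apply hn, one_smul]
      · intro χ _ hχ
        rw [hf χ hχ, smul_zero]
      · simp
    rw [← h1]
    have h2 : ∀ χ : DirichletCharacter R q, χ n • ∑ m : ZMod q, χ m⁻¹ • f m
        = ∑ m : ZMod q, (χ m⁻¹ * χ n) • f m := by
      intro χ
      rw [Finset.smul_sum]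
      refine Finset.sum_congr rfl fun m _ => ?_
      rw [smul_smul, mul_comm]
    simp_rw [h2]
    rw [Finset.sum_comm]
    simp_rw [← Finset.sum_smul]
    rw [Finset.sum_eq_single n]
    · rw [DirichletCharacter.sum_char_inv_mul_char_eq R hn, if_pos rfl, Nat.totient_prime hq]
    · intro m _ hm
      by_cases hmu : IsUnit m
      · rw [DirichletCharacter.sum_char_inv_mul_char_eq R hmu, if_neg hm, zero_smul]
      · have : Fact q.Prime := ⟨hq⟩
        have hm0 : m = 0 := by simpa using hmu
        subst hm0
        rw [Finset.sum_eq_zero, zero_smul]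
        intro χ _
        rw [MulChar.map_nonunit χ (by simp), zero_mul]
    · simp
  exact hu.smul_left_cancel.mp ((key a ha).trans (key b hb).symm)

lemma hasEnoughRootsOfUnity_padicIntClosure (p : ℕ) [Fact p.Prime] (n : ℕ) [NeZero n] :
    HasEnoughRootsOfUnity (PadicIntClosure p) n where
  prim := by
    obtain ⟨ζ, hζ⟩ := HasEnoughRootsOfUnity.exists_primitiveRoot (AlgebraicClosure ℚ_[p]) n
    have hint : IsIntegral ℤ_[p] ζ :=
      IsIntegral.of_pow (NeZero.pos n) (by rw [hζ.pow_eq_one]; exact isIntegral_one)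
    refine ⟨⟨ζ, hint⟩, ?_⟩
    exact IsPrimitiveRoot.of_map_of_injective
      (f := (integralClosure ℤ_[p] (AlgebraicClosure ℚ_[p])).val) hζ Subtype.val_injective
  cyc := inferInstance

lemma isUnit_natCast_padicIntClosure (p : ℕ) [Fact p.Prime] {n : ℕ} (h : (n : ZMod p) ≠ 0) :
    IsUnit (n : PadicIntClosure p) := by
  have h1 : IsUnit (n : ℤ_[p]) := by
    rw [PadicInt.isUnit_iff, PadicInt.norm_natCast_eq_one_iff,
      Nat.coprime_comm, ← ZMod.isUnit_iff_coprime]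
    exact h.isUnit
  simpa using h1.map (algebraMap ℤ_[p] (PadicIntClosure p))

/-! ### Moving a column by a translation and a shear -/

lemma exists_prime_gt_dvd_sub {a m : ℤ} (hm : m ≠ 0) (h : IsCoprime a m) (n : ℕ) :
    ∃ q : ℕ, n < q ∧ q.Prime ∧ m ∣ (q : ℤ) - a := by
  obtain ⟨q, hq, hqp, hmod⟩ := Nat.forall_exists_prime_gt_and_zmodEq n
    (Int.natAbs_ne_zero.mpr hm) (a := a) (by rwa [Int.natCast_natAbs, IsCoprime.abs_right_iff])
  refine ⟨q, hq, hqp, ?_⟩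
  have := hmod.symm.dvd
  rwa [Int.natAbs_dvd] at this

lemma exists_dvd_sub_and_dvd_sub {m n : ℤ} (h : IsCoprime m n) (x y : ℤ) :
    ∃ z, m ∣ z - x ∧ n ∣ z - y := by
  obtain ⟨u, v, huv⟩ := h
  refine ⟨x + (y - x) * u * m, ⟨(y - x) * u, by ring⟩, ⟨(x - y) * v, ?_⟩⟩
  linear_combination (y - x) * huv

lemma isCoprime_of_dvd_sub {m a b : ℤ} (h : m ∣ a - b) (hb : IsCoprime b m) : IsCoprime a m := by
  obtain ⟨c, hc⟩ := h
  rw [show a = b + m * c by linarith]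
  exact hb.add_mul_left_left c

/-- A column `(b, d)` with `d ≡ 1 mod N` can be moved, by a translation followed by a shear, to
`(b', q)` where `q` is a large prime with `q ≡ r mod p` and `q ≡ 1 mod N²`. -/
lemma exists_translate_shear {p N : ℕ} (hp : p.Prime) (hN : 3 < N) (hpN : ¬ p ∣ N) {r : ℤ}
    (hr : IsCoprime r (p : ℤ)) {b d : ℤ} (hbd : IsCoprime b d) (hd : (N : ℤ) ∣ d - 1) (n : ℕ) :
    ∃ (x k : ℤ) (q : ℕ), n < q ∧ q.Prime ∧ (p : ℤ) ∣ q - r ∧ (N : ℤ) ^ 2 ∣ q - 1 ∧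
      (q : ℤ) = d + N * k * (b + x * d) ∧ ¬ (q : ℤ) ∣ b + x * d := by
  have hd0 : d ≠ 0 := by
    rintro rfl
    have := Int.le_of_dvd (by norm_num) ((dvd_neg.mpr hd))
    omega
  -- a prime `b' ≡ b mod d` exceeding `N` and `p` is prime to both
  obtain ⟨b', hb'gt, hb'p, x, hx⟩ := exists_prime_gt_dvd_sub hd0 hbd (N + p)
  have hb'N : IsCoprime (b' : ℤ) (N : ℤ) := by
    rw [Nat.isCoprime_iff_coprime, Nat.Prime.coprime_iff_not_dvd hb'p]
    exact fun h => absurd (Nat.le_of_dvd (by omega) h) (by omega)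
  have hb'pp : IsCoprime (b' : ℤ) (p : ℤ) := by
    rw [Nat.isCoprime_iff_coprime, Nat.Prime.coprime_iff_not_dvd hb'p]
    exact fun h => absurd (Nat.le_of_dvd hp.pos h) (by omega)
  have hpN' : IsCoprime (p : ℤ) (N : ℤ) := by
    rwa [Nat.isCoprime_iff_coprime, Nat.Prime.coprime_iff_not_dvd hp]
  have hb'd : IsCoprime (b' : ℤ) d := isCoprime_of_dvd_sub ⟨x, hx⟩ hbd
  obtain ⟨z₁, hz₁p, hz₁N⟩ := exists_dvd_sub_and_dvd_sub (hpN'.pow_right (n := 2)) r 1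
  obtain ⟨z, hzb, hz⟩ := exists_dvd_sub_and_dvd_sub
    (hb'pp.mul_right (hb'N.pow_right (n := 2))) d z₁
  have hzp : (p : ℤ) ∣ z - r := by
    have := dvd_add ((Dvd.intro _ rfl).trans hz) hz₁p
    simpa using this
  have hzN : (N : ℤ) ^ 2 ∣ z - 1 := by
    have := dvd_add ((Dvd.intro_left _ rfl).trans hz) hz₁N
    simpa using this
  have hcop : IsCoprime z ((b' : ℤ) * (p * N ^ 2)) :=
    (isCoprime_of_dvd_sub hzb hb'd.symm).mul_right
      ((isCoprime_of_dvd_sub hzp hr).mul_right (isCoprime_of_dvd_sub hzN isCoprime_one_left))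
  have hne : (b' : ℤ) * (p * N ^ 2) ≠ 0 := by
    have := hb'p.pos; have := hp.pos
    positivity
  obtain ⟨q, hqgt, hqp, hq⟩ := exists_prime_gt_dvd_sub hne hcop n
  have hqpr : (p : ℤ) ∣ q - r := by
    have := dvd_add (((Dvd.intro _ rfl).trans (Dvd.intro_left _ rfl)).trans hq) hzp
    simpa using this
  have hqN : (N : ℤ) ^ 2 ∣ q - 1 := by
    have := dvd_add (((Dvd.intro_left _ rfl).trans (Dvd.intro_left _ rfl)).trans hq) hzN
    simpa using this
  have hqb : (b' : ℤ) ∣ q - d := by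
    have := dvd_add ((Dvd.intro _ rfl).trans hq) hzb
    simpa using this
  have hqNd : (N : ℤ) ∣ q - d := by
    have := dvd_sub ((dvd_pow_self (N : ℤ) two_ne_zero).trans hqN) hd
    simpa using this
  obtain ⟨k, hk⟩ := hb'N.symm.mul_dvd hqNd hqb
  have hbx : b + x * d = b' := by linarith
  refine ⟨x, k, q, hqgt, hqp, hqpr, hqN, ?_, ?_⟩
  · rw [hbx]; linarith
  · rw [hbx, Int.natCast_dvd_natCast]
    intro h
    have hc : IsCoprime (b' : ℤ) q := (isCoprime_of_dvd_sub hqb hb'd.symm).symm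
    rw [Nat.isCoprime_iff_coprime] at hc
    exact hqp.one_lt.ne' (Nat.eq_one_of_dvd_coprimes hc h dvd_rfl)

/-! ### Equivariance under translations and shears -/

lemma alpha_bdiv_add {E : Type} [AddCommGroup E] (α : D0 →+ E) (x y z : OnePoint ℚ) :
    α (bdiv x z) = α (bdiv x y) + α (bdiv y z) := by
  rw [← map_add]
  congr 1
  ext1
  simp [bdiv]

/-- The translation `x ↦ x + n` as an element of `Γ₁(N)`. -/
def translation (N : ℕ) (n : ℤ) : CongruenceSubgroup.Gamma1 N :=
  ⟨(⟨!![1, n; 0, 1], by simp [Matrix.det_fin_two_of]⟩ : SL(2, ℤ)),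
    (CongruenceSubgroup.Gamma1_mem N _).mpr ⟨by simp, by simp, by simp⟩⟩

/-- The shear `x ↦ x / (N k x + 1)` as an element of `Γ₁(N)`. -/
def shear (N : ℕ) (k : ℤ) : CongruenceSubgroup.Gamma1 N :=
  ⟨(⟨!![1, 0; N * k, 1], by simp [Matrix.det_fin_two_of]⟩ : SL(2, ℤ)),
    (CongruenceSubgroup.Gamma1_mem N _).mpr ⟨by simp, by simp, by simp⟩⟩

lemma moebius_translation_coe (N : ℕ) (n : ℤ) (x : ℚ) :
    moebius (translation N n : SL(2, ℤ)) (x : OnePoint ℚ) = ((x + n : ℚ) : OnePoint ℚ) := by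
  simp [moebius, translation]

lemma moebius_translation_infty (N : ℕ) (n : ℤ) :
    moebius (translation N n : SL(2, ℤ)) OnePoint.infty = OnePoint.infty := by
  simp [moebius, translation]

lemma moebius_shear_coe (N : ℕ) (k : ℤ) (x : ℚ) (h : N * k * x + 1 ≠ 0) :
    moebius (shear N k : SL(2, ℤ)) (x : OnePoint ℚ)
      = ((x / (N * k * x + 1) : ℚ) : OnePoint ℚ) := by
  simp [moebius, shear, h]

section Vanishing

variable {N : ℕ} {R E : Type} [CommRing R] [AddCommGroup E] [Module R E]
    {ρ : CongruenceSubgroup.Gamma1 N →* Module.End R E} {α : D0 →+ E}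

lemma alpha_moebius
    (hequiv : ∀ (γ : CongruenceSubgroup.Gamma1 N) (d d' : D0),
      (d' : OnePoint ℚ →₀ ℤ) = Finsupp.mapDomain (moebius (γ : SL(2, ℤ))) (d : OnePoint ℚ →₀ ℤ) →
      α d' = ρ γ (α d)) (γ : CongruenceSubgroup.Gamma1 N) (x y : OnePoint ℚ) :
    α (bdiv (moebius γ x) (moebius γ y)) = ρ γ (α (bdiv x y)) := by
  apply hequiv
  simp [bdiv, sub_eq_add_neg, Finsupp.mapDomain_add, ← Finsupp.single_neg,
    Finsupp.mapDomain_single]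

/-- Translations fix `∞` and `α ({0} − {∞}) = 0`, so they preserve the vanishing of
`α ({0} − {x})`. -/
lemma vanish_translate
    (hequiv : ∀ (γ : CongruenceSubgroup.Gamma1 N) (d d' : D0),
      (d' : OnePoint ℚ →₀ ℤ) = Finsupp.mapDomain (moebius (γ : SL(2, ℤ))) (d : OnePoint ℚ →₀ ℤ) →
      α d' = ρ γ (α d))
    (hzero : α (bdiv ((0 : ℚ) : OnePoint ℚ) OnePoint.infty) = 0) (n : ℤ) {x : ℚ}
    (hx : α (bdiv ((0 : ℚ) : OnePoint ℚ) (x : OnePoint ℚ)) = 0) :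
    α (bdiv ((0 : ℚ) : OnePoint ℚ) ((x + n : ℚ) : OnePoint ℚ)) = 0 := by
  -- `{0} − {x + n}` is `{0} − {∞}` plus the translate of `{∞} − {x}`
  have h1 := alpha_bdiv_add α OnePoint.infty ((0 : ℚ) : OnePoint ℚ) OnePoint.infty
  have h2 := alpha_bdiv_add α OnePoint.infty ((0 : ℚ) : OnePoint ℚ) (x : OnePoint ℚ)
  have h3 : α (bdiv OnePoint.infty OnePoint.infty) = 0 := by
    have h := alpha_bdiv_add α OnePoint.infty OnePoint.infty OnePoint.infty
    simpa using h
  rw [h3, hzero, add_zero] at h1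
  rw [← h1, hx, add_zero] at h2
  have h4 := alpha_moebius hequiv (translation N n) OnePoint.infty (x : OnePoint ℚ)
  rw [moebius_translation_infty, moebius_translation_coe, h2, map_zero] at h4
  rw [alpha_bdiv_add α _ OnePoint.infty, hzero, h4, add_zero]

/-- Shears fix `0`, so they preserve the vanishing of `α ({0} − {x})`. -/
lemma vanish_shear
    (hequiv : ∀ (γ : CongruenceSubgroup.Gamma1 N) (d d' : D0),
      (d' : OnePoint ℚ →₀ ℤ) = Finsupp.mapDomain (moebius (γ : SL(2, ℤ))) (d : OnePoint ℚ →₀ ℤ) →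
      α d' = ρ γ (α d)) (k : ℤ) {x : ℚ} (hk : N * k * x + 1 ≠ 0)
    (hx : α (bdiv ((0 : ℚ) : OnePoint ℚ) (x : OnePoint ℚ)) = 0) :
    α (bdiv ((0 : ℚ) : OnePoint ℚ) ((x / (N * k * x + 1) : ℚ) : OnePoint ℚ)) = 0 := by
  have h := alpha_moebius hequiv (shear N k) ((0 : ℚ) : OnePoint ℚ) (x : OnePoint ℚ)
  rw [moebius_shear_coe N k x hk, moebius_shear_coe N k 0 (by simp), hx, map_zero] at h
  simpa using h

end Vanishing

/-- Let `p > 3` be a prime, `N > 3` with `p ∤ N`, `Γ = Γ₁(N)`, `r` coprime to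
`p` with `r ≢ 1 (mod p)`, `ε > 0`, and let `X` be the set of primes `q > ε` with `q ≡ r (mod p)`
and `q ≡ 1 (mod N²)`.  Let `R` be the integral closure of `ℤ_p` in an algebraic closure of
`ℚ_p`, `E` an `R`-module with an `R`-linear `Γ`-action `ρ`, and `α : D₀ → E` a `Γ`-equivariant
group homomorphism such that `α({0} − {∞}) = 0` and such that for every prime `q ∈ X` and every
nontrivial Dirichlet character `χ` mod `q` with values in `R`,
`∑_{m=0}^{q-1} χ̄(m) · α({m/q} − {∞}) = 0`.  Then the `1`-cocycle attached to `α` is a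
coboundary: there is `e ∈ E` with `α({0} − {γ·0}) = γ·e − e` for all `γ ∈ Γ`. -/
theorem modular_symbol_cocycle_is_coboundary_of_special_values_vanish
    (p N : ℕ) [Fact p.Prime] (hp3 : 3 < p) (hN : 3 < N) (hpN : ¬ p ∣ N)
    (r : ℤ) (hr : IsCoprime r (p : ℤ)) (hr1 : (r : ZMod p) ≠ 1)
    (ε : ℝ) (hε : 0 < ε)
    (E : Type) [AddCommGroup E] [Module (PadicIntClosure p) E]
    (ρ : CongruenceSubgroup.Gamma1 N →* Module.End (PadicIntClosure p) E)
    (α : D0 →+ E)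
    (hequiv : ∀ (γ : CongruenceSubgroup.Gamma1 N) (d d' : D0),
      (d' : OnePoint ℚ →₀ ℤ) = Finsupp.mapDomain (moebius (γ : SL(2, ℤ))) (d : OnePoint ℚ →₀ ℤ) →
      α d' = ρ γ (α d))
    (hzero : α (bdiv ((0 : ℚ) : OnePoint ℚ) OnePoint.infty) = 0)
    (hvals : ∀ (q : ℕ) [NeZero q], q.Prime → ε < (q : ℝ) →
      (q : ZMod p) = (r : ZMod p) → (q : ZMod (N ^ 2)) = 1 →
      ∀ χ : DirichletCharacter (PadicIntClosure p) q, χ ≠ 1 →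
      ∑ m : ZMod q,
        χ m⁻¹ • α (bdiv (((m.val : ℚ) / (q : ℚ) : ℚ) : OnePoint ℚ) OnePoint.infty) = 0) :
    ∃ e : E, ∀ γ : CongruenceSubgroup.Gamma1 N,
      α (bdiv ((0 : ℚ) : OnePoint ℚ) (moebius (γ : SL(2, ℤ)) ((0 : ℚ) : OnePoint ℚ))) =
        ρ γ e - e := by
  have hp : p.Prime := Fact.out
  have hsymm : ∀ x : ℚ, α (bdiv (x : OnePoint ℚ) OnePoint.infty) = 0 ↔
      α (bdiv ((0 : ℚ) : OnePoint ℚ) (x : OnePoint ℚ)) = 0 := by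
    intro x
    have h := alpha_bdiv_add α ((0 : ℚ) : OnePoint ℚ) (x : OnePoint ℚ) OnePoint.infty
    rw [hzero] at h
    constructor <;> intro h' <;> simpa [h'] using h.symm
  refine ⟨0, fun γ => ?_⟩
  rw [map_zero, sub_zero]
  obtain ⟨-, hd, -⟩ := (CongruenceSubgroup.Gamma1_mem N γ).mp γ.2
  have hdet := Matrix.SpecialLinearGroup.det_coe (γ : SL(2, ℤ))
  rw [Matrix.det_fin_two] at hdet
  have hmoeb : moebius (γ : SL(2, ℤ)) ((0 : ℚ) : OnePoint ℚ) =
      if ((γ : SL(2, ℤ)) 1 1 : ℚ) = 0 then OnePoint.infty else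
        ((((γ : SL(2, ℤ)) 0 1 : ℚ) / ((γ : SL(2, ℤ)) 1 1 : ℚ) : ℚ) : OnePoint ℚ) := by
    simp [moebius]
  rw [hmoeb]
  generalize (γ : SL(2, ℤ)) 0 1 = b at *
  generalize (γ : SL(2, ℤ)) 1 1 = d at *
  have hbd : IsCoprime b d :=
    ⟨-((γ : SL(2, ℤ)) 1 0), (γ : SL(2, ℤ)) 0 0, by linear_combination hdet⟩
  have hd1 : (N : ℤ) ∣ d - 1 := by
    rw [← ZMod.intCast_zmod_eq_zero_iff_dvd]
    simp [hd]
  obtain ⟨x, k, q, hqε, hq, hqr, hqN, hqe, hqb⟩ :=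
    exists_translate_shear hp hN hpN hr hbd hd1 ⌈ε⌉₊
  have hd0 : (d : ℚ) ≠ 0 := by
    intro h
    have h' : d = 0 := by exact_mod_cast h
    subst h'
    have := Int.le_of_dvd (by norm_num) ((dvd_neg.mpr hd1))
    omega
  rw [if_neg hd0]
  have : Fact q.Prime := ⟨hq⟩
  have hq0 : (q : ℚ) ≠ 0 := by exact_mod_cast hq.ne_zero
  have hqr' : (q : ZMod p) = (r : ZMod p) := by
    have := (ZMod.intCast_zmod_eq_zero_iff_dvd _ p).mpr hqr
    simpa [sub_eq_zero] using this
  have hqN' : (q : ZMod (N ^ 2)) = 1 := by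
    have := (ZMod.intCast_zmod_eq_zero_iff_dvd ((q : ℤ) - 1) (N ^ 2)).mpr (by exact_mod_cast hqN)
    simpa [sub_eq_zero] using this
  have hunit : IsUnit ((q - 1 : ℕ) : PadicIntClosure p) := by
    apply isUnit_natCast_padicIntClosure
    rw [Nat.cast_sub hq.one_le, hqr', Nat.cast_one]
    exact sub_ne_zero.mpr hr1
  have : NeZero (Monoid.exponent (ZMod q)ˣ) := ⟨Monoid.exponent_ne_zero_of_finite⟩
  have := hasEnoughRootsOfUnity_padicIntClosure p (Monoid.exponent (ZMod q)ˣ)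
  have hconst := fun {a b : ZMod q} => eq_of_twisted_sums_eq_zero (R := PadicIntClosure p) hq hunit
    (fun m : ZMod q => α (bdiv (((m.val : ℚ) / (q : ℚ) : ℚ) : OnePoint ℚ) OnePoint.infty))
    (hvals q hq (Nat.lt_of_ceil_lt hqε) hqr' hqN') (a := a) (b := b)
  -- `1/q` is the image of `0` under a translation and a shear
  have hone : α (bdiv ((0 : ℚ) : OnePoint ℚ) ((1 / q : ℚ) : OnePoint ℚ)) = 0 := by
    obtain ⟨l, hl⟩ := (dvd_pow_self (N : ℤ) two_ne_zero).trans hqN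
    have hl' : (N : ℚ) * l * 1 + 1 = q := by
      have : (q : ℚ) - 1 = N * l := by exact_mod_cast hl
      linarith
    have h0 : α (bdiv ((0 : ℚ) : OnePoint ℚ) ((0 : ℚ) : OnePoint ℚ)) = 0 := by
      simpa using alpha_bdiv_add α ((0 : ℚ) : OnePoint ℚ) ((0 : ℚ) : OnePoint ℚ)
        ((0 : ℚ) : OnePoint ℚ)
    have h1 := vanish_translate hequiv hzero 1 h0
    rw [zero_add, Int.cast_one] at h1
    have h2 := vanish_shear hequiv l (by rw [hl']; exact hq0) h1
    rwa [hl'] at h2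
  have hm : α (bdiv ((0 : ℚ) : OnePoint ℚ) (((b + x * d : ℤ) / q : ℚ) : OnePoint ℚ)) = 0 := by
    set m : ZMod q := ((b + x * d : ℤ) : ZMod q) with hmdef
    have hmu : IsUnit m := by
      rw [isUnit_iff_ne_zero, hmdef, Ne, ZMod.intCast_zmod_eq_zero_iff_dvd]
      exact hqb
    have h1 := hconst hmu isUnit_one
    simp only [ZMod.val_one, Nat.cast_one] at h1
    rw [(hsymm _).mpr hone, hsymm] at h1
    have hval : (m.val : ℤ) = (b + x * d) % q := ZMod.val_intCast _
    have h2 := vanish_translate hequiv hzero ((b + x * d) / q) h1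
    convert h2 using 4
    have h3 : (m.val : ℚ) + q * (((b + x * d) / q : ℤ) : ℚ) = ((b + x * d : ℤ) : ℚ) := by
      have := Int.emod_add_mul_ediv (b + x * d) q
      rw [← hval] at this
      exact_mod_cast this
    rw [← h3]
    field_simp
  -- undo the shear, then the translation
  have hqe' : (q : ℚ) = d + N * k * (b + x * d) := by exact_mod_cast hqe
  have hden : (N : ℚ) * (-k : ℤ) * ((b + x * d : ℤ) / q : ℚ) + 1 = d / q := by
    push_cast
    field_simp
    linear_combination hqe'
  have h1 := vanish_shear hequiv (-k) (by rw [hden]; exact div_ne_zero hd0 hq0) hm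
  have h2 := vanish_translate hequiv hzero (-x) h1
  convert h2 using 4
  rw [hden]
  push_cast
  field_simp
  ring
end

section
/- Let p be a prime and let P ∈ ℤ_p[X] be a distinguished polynomial, i.e. monic of degree n ≥ 1 with every coefficient of degree < n divisible by p. Let s ≥ 1 be an integer with p^{s−1}(p−1) > n, let ζ be a primitive p^s-th root of unity, and equip the cyclotomic field ℚ_p(ζ) with the unique absolute value ‖·‖ extending the p-adic absolute value, normalized by ‖p‖ = p^{−1}. Then ‖P(1−ζ)‖ = p^{−n/(p^{s−1}(p−1))}. -/
/-!
Write `π = 1 - ζ` and `φ = p ^ (s - 1) * (p - 1)`. Natural numbers have norm at most `1` in `ℚ_p`,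
hence in `L`, so the norm of `L` is ultrametric. Any two primitive `p ^ s`-th roots of unity
`ζ`, `η` are powers of one another, so each of `1 - ζ`, `1 - η` is the other times a sum of roots
of unity, which has norm at most `1`; thus they have the same norm. Evaluating the `p ^ s`-th cyclotomic polynomial at `1` gives
`p = ∏ (1 - η)`, whence `‖π‖ ^ φ = p⁻¹` (`norm_one_sub_pow_totient`).

In `P(π) = π ^ n + ∑_{i < n} aᵢ π ^ i` every term of the sum has norm at most
`p⁻¹ = ‖π‖ ^ φ < ‖π‖ ^ n`, because `n < φ` and `‖π‖ < 1`. The leading term therefore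
dominates, and `‖P(π)‖ = ‖π‖ ^ n`.
-/

/-- A normed field extending `ℚ_p` isometrically is ultrametric, even though `NormedField` only
provides the triangle inequality. -/
lemma isUltrametricDist_of_isometric_padic (p : ℕ) [Fact p.Prime]
    (L : Type*) [NormedField L] [Algebra ℚ_[p] L]
    (hiso : ∀ x : ℚ_[p], ‖algebraMap ℚ_[p] L x‖ = ‖x‖) : IsUltrametricDist L := by
  refine IsUltrametricDist.isUltrametricDist_of_forall_norm_natCast_le_one fun m ↦ ?_
  rw [← map_natCast (algebraMap ℚ_[p] L) m, hiso]
  exact_mod_cast PadicInt.norm_le_one (m : ℤ_[p])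

lemma norm_one_sub_pow_le {L : Type*} [NormedField L] [IsUltrametricDist L] {ζ : L}
    (hζ : ‖ζ‖ = 1) (k : ℕ) : ‖1 - ζ ^ k‖ ≤ ‖1 - ζ‖ := by
  rw [← mul_neg_geom_sum, norm_mul]
  refine mul_le_of_le_one_right (norm_nonneg _) ?_
  exact IsUltrametricDist.norm_sum_le_of_forall_le_of_nonneg zero_le_one fun i _ ↦ by simp [hζ]

lemma norm_one_sub_eq_of_isPrimitiveRoot {L : Type*} [NormedField L] [IsUltrametricDist L]
    {m : ℕ} (hm : m ≠ 0) {ζ η : L} (hζ : IsPrimitiveRoot ζ m) (hη : IsPrimitiveRoot η m) :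
    ‖1 - η‖ = ‖1 - ζ‖ := by
  have : NeZero m := ⟨hm⟩
  have key : ∀ {α β : L}, IsPrimitiveRoot α m → IsPrimitiveRoot β m → ‖1 - β‖ ≤ ‖1 - α‖ := by
    intro α β hα hβ
    obtain ⟨k, -, rfl⟩ := hα.eq_pow_of_pow_eq_one hβ.pow_eq_one
    refine norm_one_sub_pow_le ?_ k
    refine (pow_eq_one_iff_of_nonneg (norm_nonneg α) hm).1 ?_
    rw [← norm_pow, hα.pow_eq_one, norm_one]
  exact le_antisymm (key hζ hη) (key hη hζ)

/-- The product of `1 - η` over all primitive `p ^ s`-th roots of unity `η` is the value `p` of the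
cyclotomic polynomial at `1`, and all factors have the same norm. -/
lemma norm_one_sub_pow_totient {p s : ℕ} [Fact p.Prime] (hs : 1 ≤ s)
    {L : Type*} [NormedField L] [IsUltrametricDist L] {ζ : L} (hζ : IsPrimitiveRoot ζ (p ^ s)) :
    ‖1 - ζ‖ ^ (p ^ (s - 1) * (p - 1)) = ‖(p : L)‖ := by
  have hp : p.Prime := Fact.out
  obtain ⟨k, rfl⟩ : ∃ k, s = k + 1 := ⟨s - 1, by omega⟩
  rw [← Polynomial.eval_one_cyclotomic_prime_pow (R := L) (p := p) k,
    Polynomial.cyclotomic_eq_prod_X_sub_primitiveRoots hζ, Polynomial.eval_prod, norm_prod,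
    Finset.prod_congr rfl (g := fun _ ↦ ‖1 - ζ‖), Finset.prod_const, hζ.card_primitiveRoots,
    Nat.totient_prime_pow_succ hp, Nat.add_sub_cancel]
  intro η hη
  simpa using norm_one_sub_eq_of_isPrimitiveRoot (pow_ne_zero _ hp.ne_zero) hζ
    (isPrimitiveRoot_of_mem_primitiveRoots hη)


/-- Let `P ∈ ℤ_p[X]` be a distinguished polynomial of degree `n ≥ 1`, let
`s ≥ 1` with `p^(s−1)(p−1) > n`, and let `ζ` be a primitive `p^s`-th root of unity in a field
`L` carrying the unique absolute value extending the `p`-adic one (modelled by an arbitrary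
normed field `L` equipped with an isometric `ℚ_p`-algebra structure).  Then
`‖P(1−ζ)‖ = p^(−n/(p^(s−1)(p−1)))`. -/
theorem norm_distinguished_poly_at_one_sub_primitive_root
    (p : ℕ) [Fact p.Prime] (n s : ℕ)
    (P : Polynomial ℤ_[p]) (hmonic : P.Monic) (hdeg : P.natDegree = n) (hn : 1 ≤ n)
    (hdist : ∀ i < n, (p : ℤ_[p]) ∣ P.coeff i)
    (hs : 1 ≤ s) (hns : n < p ^ (s - 1) * (p - 1))
    (L : Type*) [NormedField L] [Algebra ℚ_[p] L]
    (hiso : ∀ x : ℚ_[p], ‖algebraMap ℚ_[p] L x‖ = ‖x‖)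
    (ζ : L) (hζ : IsPrimitiveRoot ζ (p ^ s)) :
    ‖Polynomial.aeval (1 - ζ) (P.map (algebraMap ℤ_[p] ℚ_[p]))‖ =
      (p : ℝ) ^ (-(n : ℝ) / ((p : ℝ) ^ (s - 1) * ((p : ℝ) - 1))) := by
  have hp : p.Prime := Fact.out
  have : IsUltrametricDist L := isUltrametricDist_of_isometric_padic p L hiso
  set φ := p ^ (s - 1) * (p - 1) with hφ
  set r := ‖1 - ζ‖ with hr
  have hr0 : 0 ≤ r := norm_nonneg _
  have hp1 : (1 : ℝ) < p := by exact_mod_cast hp.one_lt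
  have hp0 : (0 : ℝ) < p := by linarith
  have hrφ : r ^ φ = (p : ℝ)⁻¹ := by
    rw [hr, hφ, norm_one_sub_pow_totient hs hζ, ← map_natCast (algebraMap ℚ_[p] L) p, hiso,
      Padic.norm_p]
  have hφ0 : φ ≠ 0 := by omega
  have hr1 : r < 1 := by
    rw [← pow_lt_one_iff_of_nonneg hr0 hφ0, hrφ]
    exact inv_lt_one_of_one_lt₀ hp1
  have hrpos : 0 < r := by
    refine hr0.lt_of_ne' fun h ↦ ?_
    rw [h, zero_pow hφ0] at hrφ
    exact (inv_pos.2 hp0).ne hrφ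
  have hsum : Polynomial.aeval (1 - ζ) (P.map (algebraMap ℤ_[p] ℚ_[p])) =
      (∑ i ∈ Finset.range n, algebraMap ℚ_[p] L (P.coeff i : ℚ_[p]) * (1 - ζ) ^ i)
        + (1 - ζ) ^ n := by
    have hlead : P.coeff n = 1 := hdeg ▸ hmonic.coeff_natDegree
    rw [Polynomial.aeval_eq_sum_range' (n := n + 1), Finset.sum_range_succ]
    · simp [Polynomial.coeff_map, hlead, Algebra.smul_def]
    · rw [hmonic.natDegree_map, hdeg]
      exact n.lt_succ_self
  have hlow : ‖∑ i ∈ Finset.range n, algebraMap ℚ_[p] L (P.coeff i : ℚ_[p]) * (1 - ζ) ^ i‖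
      ≤ (p : ℝ)⁻¹ := by
    refine IsUltrametricDist.norm_sum_le_of_forall_le_of_nonneg (inv_nonneg.2 hp0.le) fun i hi ↦ ?_
    obtain ⟨c, hc⟩ := hdist i (Finset.mem_range.1 hi)
    rw [norm_mul, hiso, norm_pow, ← PadicInt.norm_def, hc, norm_mul, PadicInt.norm_p]
    have h1 := PadicInt.norm_le_one c
    have h2 : r ^ i ≤ 1 := pow_le_one₀ hr0 hr1.le
    rw [mul_assoc]
    exact mul_le_of_le_one_right (inv_nonneg.2 hp0.le) (mul_le_one₀ h1 (by positivity) h2)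
  have hdom : (p : ℝ)⁻¹ < ‖(1 - ζ) ^ n‖ := by
    rw [norm_pow, ← hrφ]
    exact pow_lt_pow_right_of_lt_one₀ hrpos hr1 hns
  have hlt := hlow.trans_lt hdom
  rw [hsum, IsUltrametricDist.norm_add_eq_max_of_norm_ne_norm hlt.ne, max_eq_right hlt.le,
    norm_pow, ← hr]
  have hcast : (p : ℝ) ^ (s - 1) * ((p : ℝ) - 1) = (φ : ℝ) := by
    rw [hφ]
    push_cast [Nat.cast_sub hp.one_le]
    rfl
  have hrr : r = (p : ℝ) ^ (-(1 : ℝ) / φ) := by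
    rw [neg_div, Real.rpow_neg hp0.le, ← Real.inv_rpow hp0.le, ← hrφ, one_div,
      Real.pow_rpow_inv_natCast hr0 hφ0]
  rw [hcast, hrr, ← Real.rpow_mul_natCast hp0.le]
  congr 1
  ring
end

section
/- Let K be a finite extension of ℚ_p with ring of integers O, let n ≥ 1, and let x = (x₁,…,xₙ) and y = (y₁,…,yₙ) be elements of Oⁿ. Let I ⊆ O[X₁,…,Xₙ] be the kernel of the evaluation ring homomorphism f ↦ f(x₁,…,xₙ). Then the set of real numbers {‖f(y₁,…,yₙ)‖ : f ∈ I} has a greatest element, and this greatest element equals max_{1≤i≤n} ‖xᵢ − yᵢ‖. -/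
/-!
For `f` with coefficients in `O`, the difference `f(y) - f(x)` lies in the ideal generated by the
`yᵢ - xᵢ`, so the ultrametric inequality gives `‖f(y) - f(x)‖ ≤ max_i ‖xᵢ - yᵢ‖`
(`norm_eval_sub_eval_le`). If `f(x) = 0` this bounds `‖f(y)‖`, and the bound is attained by the
linear polynomial `Xᵢ - xᵢ`, where `i` is an index at which the maximum is reached.
-/

/-- The ring of integers `O = {x : ‖x‖ ≤ 1}` of an ultrametric normed field. -/
def IntegerRing (K : Type*) [NormedField K] [IsUltrametricDist K] : Subring K where
  carrier := {x : K | ‖x‖ ≤ 1}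
  zero_mem' := by simp
  one_mem' := by simp
  add_mem' {a b} ha hb := le_trans (IsUltrametricDist.norm_add_le_max a b) (max_le ha hb)
  neg_mem' {a} ha := by simpa using ha
  mul_mem' {a b} ha hb := by
    rw [Set.mem_setOf_eq, norm_mul]
    exact mul_le_one₀ ha (norm_nonneg _) hb

/-- Polynomials with integral coefficients are 1-Lipschitz on integral points: a bound for the
distance of `x` and `y` also bounds the distance of the values. -/
theorem norm_eval_sub_eval_le {K : Type*} [NormedField K] [IsUltrametricDist K] {σ : Type*}
    (x y : σ → IntegerRing K) {M : ℝ} (hM : 0 ≤ M) (h : ∀ i, ‖(x i : K) - (y i : K)‖ ≤ M)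
    (f : MvPolynomial σ (IntegerRing K)) :
    ‖(MvPolynomial.eval y f : K) - (MvPolynomial.eval x f : K)‖ ≤ M := by
  induction f using MvPolynomial.induction_on with
  | C a => simpa using hM
  | add f g hf hg =>
    simp only [map_add, Subring.coe_add, add_sub_add_comm]
    exact (IsUltrametricDist.norm_add_le_max _ _).trans (max_le hf hg)
  | mul_X f i hf =>
    simp only [map_mul, MvPolynomial.eval_X, Subring.coe_mul]
    rw [show (MvPolynomial.eval y f : K) * (y i : K) - (MvPolynomial.eval x f : K) * (x i : K) =
      (MvPolynomial.eval y f : K) * ((y i : K) - (x i : K)) +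
        ((MvPolynomial.eval y f : K) - (MvPolynomial.eval x f : K)) * (x i : K) by ring]
    refine (IsUltrametricDist.norm_add_le_max _ _).trans (max_le ?_ ?_)
    · rw [norm_mul, norm_sub_rev]
      exact (mul_le_of_le_one_left (norm_nonneg _) (MvPolynomial.eval y f).2).trans (h i)
    · rw [norm_mul]
      exact (mul_le_of_le_one_right (norm_nonneg _) (x i).2).trans hf

/-- Let `K` be a finite extension of `ℚ_p` with ring of integers `O`, and
`x y ∈ Oⁿ` (`n ≥ 1`).  Let `I` be the kernel of evaluation at `x` on `O[X₁,…,Xₙ]`.  Then the set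
`{‖f(y)‖ : f ∈ I}` has a greatest element, namely `max_i ‖xᵢ − yᵢ‖`. -/
theorem greatest_value_of_vanishing_ideal
    (p : ℕ) [Fact p.Prime]
    (K : Type) [NormedField K] [IsUltrametricDist K] [CompleteSpace K]
    [Algebra ℚ_[p] K] [FiniteDimensional ℚ_[p] K]
    (hiso : ∀ z : ℚ_[p], ‖algebraMap ℚ_[p] K z‖ = ‖z‖)
    (n : ℕ) (hn : 0 < n) (x y : Fin n → IntegerRing K) :
    IsGreatest
      {t : ℝ | ∃ f ∈ RingHom.ker (MvPolynomial.eval x), t = ‖(MvPolynomial.eval y f : K)‖}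
      (Finset.univ.sup'
        (Finset.univ_nonempty_iff.mpr (Fin.pos_iff_nonempty.mp hn))
        fun i => ‖(x i : K) - (y i : K)‖) := by
  constructor
  · obtain ⟨i, -, hi⟩ := Finset.exists_mem_eq_sup' (s := Finset.univ)
      (Finset.univ_nonempty_iff.mpr (Fin.pos_iff_nonempty.mp hn))
      fun i => ‖(x i : K) - (y i : K)‖
    refine ⟨MvPolynomial.X i - MvPolynomial.C (x i), ?_, ?_⟩
    · simp [RingHom.mem_ker]
    · rw [hi, norm_sub_rev]
      simp
  · rintro t ⟨f, hf, rfl⟩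
    have hle : ∀ i, ‖(x i : K) - (y i : K)‖ ≤ Finset.univ.sup'
        (Finset.univ_nonempty_iff.mpr (Fin.pos_iff_nonempty.mp hn))
        fun i => ‖(x i : K) - (y i : K)‖ := fun i =>
      Finset.le_sup' (fun i => ‖(x i : K) - (y i : K)‖) (Finset.mem_univ i)
    have key := norm_eval_sub_eval_le x y ((norm_nonneg _).trans (hle ⟨0, hn⟩)) hle f
    rw [RingHom.mem_ker] at hf
    simpa [hf] using key
end
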